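/- arXiv:2303.14938 — 2 statements merged into one kernel-verified Lean document; each statement's English description precedes it below -/
import Mathlib

section
/- Let μ be a probability measure on ℝⁿ with a regular, log-concave density ρ = e^{−ψ}. Then the varentropy inequality holds: Var_μ(ψ) = ∫ ψ² dμ − (∫ ψ dμ)² ≤ n. -/
open MeasureTheory Real
open scoped ENNReal RealInnerProductSpace

noncomputable section

abbrev Euc (n : ℕ) := EuclideanSpace ℝ (Fin n)

/-- A nonnegative function `g` is log-concave: `g(ax+by) ≥ g(x)^a g(y)^b`. -/
def IsLogConcaveFun {n : ℕ} (g : Euc n → ℝ) : Prop :=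
  (∀ x, 0 ≤ g x) ∧
  ∀ x y : Euc n, ∀ a b : ℝ, 0 ≤ a → 0 ≤ b → a + b = 1 →
    g x ^ a * g y ^ b ≤ g (a • x + b • y)

def IsLogConcaveMeasure {n : ℕ} (μ : Measure (Euc n)) : Prop :=
  ∃ ρ : Euc n → ℝ, Measurable ρ ∧ IsLogConcaveFun ρ ∧
    μ = volume.withDensity (fun x => ENNReal.ofReal (ρ x))

def poincareSet {n : ℕ} (μ : Measure (Euc n)) : Set ℝ :=
  {C : ℝ | 0 ≤ C ∧ ∀ f : Euc n → ℝ, LocallyLipschitz f →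
    Integrable (fun x => ‖gradient f x‖ ^ 2) μ →
    ∫ x, f x ^ 2 ∂μ - (∫ x, f x ∂μ) ^ 2 ≤ C * ∫ x, ‖gradient f x‖ ^ 2 ∂μ}

def poincareConst {n : ℕ} (μ : Measure (Euc n)) : ℝ := sInf (poincareSet μ)

def covMatrix {n : ℕ} (μ : Measure (Euc n)) : Matrix (Fin n) (Fin n) ℝ :=
  Matrix.of fun i j => ∫ x, x i * x j ∂μ - (∫ x, x i ∂μ) * (∫ x, x j ∂μ)

def opNorm {n : ℕ} (M : Matrix (Fin n) (Fin n) ℝ) : ℝ :=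
  ‖Matrix.toEuclideanCLM (𝕜 := ℝ) M‖

def IsIsotropic {n : ℕ} (μ : Measure (Euc n)) : Prop :=
  (∫ x, x ∂μ) = 0 ∧ ∀ i j, ∫ x, x i * x j ∂μ = if i = j then 1 else 0

def UniformlyLogConcave {n : ℕ} (t : ℝ) (μ : Measure (Euc n)) : Prop :=
  ∃ g : Euc n → ℝ, Measurable g ∧ IsLogConcaveFun g ∧
    μ = volume.withDensity (fun x => ENNReal.ofReal (Real.exp (-t * ‖x‖ ^ 2 / 2) * g x))

def IsRegularPotential {n : ℕ} (ψ : Euc n → ℝ) : Prop :=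
  ContDiff ℝ (⊤ : ℕ∞) ψ ∧
  (∃ ε : ℝ, 0 < ε ∧ ∀ x v : Euc n,
    ε * ‖v‖ ^ 2 ≤ iteratedFDeriv ℝ 2 ψ x ![v, v] ∧
    iteratedFDeriv ℝ 2 ψ x ![v, v] ≤ ε⁻¹ * ‖v‖ ^ 2) ∧
  (∀ m : ℕ, ∃ C : ℝ, ∃ k : ℕ, ∀ x, ‖iteratedFDeriv ℝ m ψ x‖ ≤ C * (1 + ‖x‖) ^ k)

def IsRegularMeasure {n : ℕ} (μ : Measure (Euc n)) (ψ : Euc n → ℝ) : Prop :=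
  IsRegularPotential ψ ∧ μ = volume.withDensity (fun x => ENNReal.ofReal (Real.exp (-ψ x)))

def IsTempered {n : ℕ} (ρ : Euc n → ℝ) (f : Euc n → ℝ) : Prop :=
  ContDiff ℝ (⊤ : ℕ∞) f ∧ ∀ m : ℕ, ∃ C : ℝ, 0 < C ∧ ∃ a : ℝ, 0 < a ∧ ∀ x,
    ‖iteratedFDeriv ℝ m f x‖ ≤ C / Real.sqrt (ρ x) * Real.exp (-a * ‖x‖)

def lap {n : ℕ} (f : Euc n → ℝ) (x : Euc n) : ℝ :=
  ∑ i, iteratedFDeriv ℝ 2 f x ![EuclideanSpace.single i (1:ℝ), EuclideanSpace.single i (1:ℝ)]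

def Lop {n : ℕ} (ψ u : Euc n → ℝ) (x : Euc n) : ℝ :=
  lap u x - ⟪gradient ψ x, gradient u x⟫

def gaussDensity (n : ℕ) (s : ℝ) (x : Euc n) : ℝ :=
  (2 * π * s) ^ (-(n : ℝ) / 2) * Real.exp (-‖x‖ ^ 2 / (2 * s))

def gaussMeasure (n : ℕ) (s : ℝ) : Measure (Euc n) :=
  volume.withDensity fun x => ENNReal.ofReal (gaussDensity n s x)

def tiltZ {n : ℕ} (ρ : Euc n → ℝ) (t : ℝ) (θ : Euc n) : ℝ :=
  ∫ x, Real.exp (⟪θ, x⟫ - t * ‖x‖ ^ 2 / 2) * ρ x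

def tiltDensity {n : ℕ} (ρ : Euc n → ℝ) (t : ℝ) (θ : Euc n) (x : Euc n) : ℝ :=
  Real.exp (⟪θ, x⟫ - t * ‖x‖ ^ 2 / 2) * ρ x / tiltZ ρ t θ

def tiltMeasure {n : ℕ} (ρ : Euc n → ℝ) (t : ℝ) (θ : Euc n) : Measure (Euc n) :=
  volume.withDensity fun x => ENNReal.ofReal (tiltDensity ρ t θ x)

def varD {n : ℕ} (p : Euc n → ℝ) (f : Euc n → ℝ) : ℝ :=
  (∫ x, f x ^ 2 * p x) - (∫ x, f x * p x) ^ 2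

end

/-!
By the Prékopa–Leindler inequality, `α ↦ ∫ ρ (x / α) ^ α dx = α ^ n ∫ ρ ^ α` is log-concave on
`α > 0` when `ρ` is log-concave. At `α = 1 - t` its logarithm is the cumulant generating function of
`-log ρ` under `ρ dx` plus `n log (1 - t)`; the second derivative of this concave function at
`t = 0` is the varentropy minus `n`.
-/

open Set Filter Module ProbabilityTheory
open scoped Pointwise Topology

theorem volume_add_volume_le_volume_add_of_isCompact {K L : Set ℝ} (hK : IsCompact K)
    (hL : IsCompact L) (hK₀ : K.Nonempty) (hL₀ : L.Nonempty) :
    volume K + volume L ≤ volume (K + L) := by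
  obtain ⟨k, hkK, hk⟩ := hK.exists_isGreatest hK₀
  obtain ⟨l, hlL, hl⟩ := hL.exists_isLeast hL₀
  -- `K + l` and `k + L` are translates inside `K + L` that meet only at `k + l`.
  have hdisj : AEDisjoint volume (l +ᵥ K) (k +ᵥ L) := by
    refine measure_mono_null (t := {k + l}) ?_ (by simp)
    rintro _ ⟨⟨x, hx, rfl⟩, y, hy, hxy⟩
    have hxk := hk hx
    have hly := hl hy
    simp only [vadd_eq_add, mem_singleton_iff] at hxy ⊢
    linarith
  calc volume K + volume L = volume (l +ᵥ K) + volume (k +ᵥ L) := by simp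
    _ = volume ((l +ᵥ K) ∪ (k +ᵥ L)) :=
      (measure_union₀ (hL.vadd k).measurableSet.nullMeasurableSet hdisj).symm
    _ ≤ volume (K + L) := by
      refine measure_mono (union_subset ?_ (vadd_set_subset_add hkK))
      rw [add_comm K L]
      exact vadd_set_subset_add hlL

theorem volume_add_volume_le_volume_add {A B : Set ℝ} (hA : MeasurableSet A)
    (hB : MeasurableSet B) (hA₀ : A.Nonempty) (hB₀ : B.Nonempty) :
    volume A + volume B ≤ volume (A + B) := by
  obtain ⟨a, ha⟩ := hA₀
  obtain ⟨b, hb⟩ := hB₀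
  simp only [hA.measure_eq_iSup_isCompact, hB.measure_eq_iSup_isCompact, iSup_and']
  refine ENNReal.biSup_add_biSup_le' ⟨∅, by simp⟩ ⟨∅, by simp⟩ ?_
  rintro K ⟨hKA, hK⟩ L ⟨hLB, hL⟩
  calc volume K + volume L ≤ volume (insert a K) + volume (insert b L) := by
        gcongr <;> exact subset_insert _ _
    _ ≤ volume (insert a K + insert b L) :=
      volume_add_volume_le_volume_add_of_isCompact (hK.insert a) (hL.insert b)
        (insert_nonempty _ _) (insert_nonempty _ _)
    _ ≤ volume (A + B) :=
      measure_mono (add_subset_add (insert_subset ha hKA) (insert_subset hb hLB))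

theorem ofReal_mul_volume_add_le_volume_smul_add_smul {a b : ℝ} (ha : 0 ≤ a) (hb : 0 ≤ b)
    {A B : Set ℝ} (hA : MeasurableSet A) (hB : MeasurableSet B) (hA₀ : A.Nonempty)
    (hB₀ : B.Nonempty) :
    ENNReal.ofReal a * volume A + ENNReal.ofReal b * volume B ≤ volume (a • A + b • B) := by
  simpa [Measure.addHaar_smul, abs_of_nonneg, ha, hb] using
    volume_add_volume_le_volume_add (hA.const_smul₀ a) (hB.const_smul₀ b)
      (hA₀.smul_set (a := a)) (hB₀.smul_set (a := b))

theorem lintegral_eq_lintegral_Ioi_meas_ofReal_lt {α : Type*} [MeasurableSpace α]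
    (μ : Measure α) [SFinite μ] {f : α → ℝ≥0∞} (hf : Measurable f) :
    ∫⁻ x, f x ∂μ = ∫⁻ t in Ioi (0 : ℝ), μ {x | ENNReal.ofReal t < f x} := by
  have volume_levels (c : ℝ≥0∞) : volume.restrict (Ioi 0) {t : ℝ | ENNReal.ofReal t < c} = c := by
    rw [Measure.restrict_apply (measurableSet_lt (by fun_prop) measurable_const)]
    induction c with
    | top => simp
    | coe c =>
      have : {t : ℝ | ENNReal.ofReal t < c} ∩ Ioi 0 = Ioo 0 (c : ℝ) := by
        ext t
        simpa [and_comm] using fun ht : 0 < t ↦ ENNReal.ofReal_lt_coe_iff ht.le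
      simp [this]
  have hS : MeasurableSet {p : α × ℝ | ENNReal.ofReal p.2 < f p.1} :=
    measurableSet_lt (by fun_prop) (by fun_prop)
  calc ∫⁻ x, f x ∂μ
      = ∫⁻ x, volume.restrict (Ioi 0) {t : ℝ | ENNReal.ofReal t < f x} ∂μ := by
        simp only [volume_levels]
    _ = μ.prod (volume.restrict (Ioi 0)) {p : α × ℝ | ENNReal.ofReal p.2 < f p.1} :=
      (Measure.prod_apply hS).symm
    _ = ∫⁻ t in Ioi (0 : ℝ), μ {x | ENNReal.ofReal t < f x} := Measure.prod_apply_symm hS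

theorem rpow_mul_rpow_le_ofReal_mul_add {a b : ℝ} (ha : 0 < a) (hb : 0 < b) (hab : a + b = 1)
    (x y : ℝ≥0∞) : x ^ a * y ^ b ≤ ENNReal.ofReal a * x + ENNReal.ofReal b * y := by
  refine (ENNReal.young_inequality (x ^ a) (y ^ b)
    (Real.HolderConjugate.inv_inv ha hb hab)).trans_eq ?_
  rw [ENNReal.rpow_rpow_inv ha.ne', ENNReal.rpow_rpow_inv hb.ne', ENNReal.ofReal_inv_of_pos ha,
    ENNReal.ofReal_inv_of_pos hb]
  simp only [div_eq_mul_inv, inv_inv, mul_comm]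

theorem smul_superlevel_add_smul_superlevel_subset {E : Type*} [Add E] [SMul ℝ E]
    {f g h : E → ℝ≥0∞} {a b : ℝ} (ha : 0 < a) (hb : 0 < b) (hab : a + b = 1)
    (hfgh : ∀ x y, f x ^ a * g y ^ b ≤ h (a • x + b • y)) (c : ℝ≥0∞) :
    a • {x | c < f x} + b • {x | c < g x} ⊆ {x | c < h x} := by
  rintro _ ⟨_, ⟨x, hx, rfl⟩, _, ⟨y, hy, rfl⟩, rfl⟩
  calc c = c ^ a * c ^ b := by
        rw [← ENNReal.rpow_add_of_nonneg _ _ ha.le hb.le, hab, ENNReal.rpow_one]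
    _ < f x ^ a * g y ^ b :=
      ENNReal.mul_lt_mul (ENNReal.rpow_lt_rpow hx ha) (ENNReal.rpow_lt_rpow hy hb)
    _ ≤ h (a • x + b • y) := hfgh x y

/-- The Prékopa–Leindler inequality for `μ`, as a property of the measure, so that it can be
transferred to products, images and multiples of measures. -/
def PrekopaLeindler {E : Type*} [AddCommGroup E] [Module ℝ E] [MeasurableSpace E]
    (μ : Measure E) : Prop :=
  ∀ ⦃a b : ℝ⦄, 0 < a → 0 < b → a + b = 1 → ∀ ⦃f g h : E → ℝ≥0∞⦄,
    Measurable f → Measurable g → Measurable h →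
    (∀ x y, f x ^ a * g y ^ b ≤ h (a • x + b • y)) →
    (∫⁻ x, f x ∂μ) ^ a * (∫⁻ x, g x ∂μ) ^ b ≤ ∫⁻ x, h x ∂μ

section RealLine

variable {a b : ℝ} {f g h : ℝ → ℝ≥0∞}

theorem prekopaLeindler_real_of_iSup_eq_one (ha : 0 < a) (hb : 0 < b) (hab : a + b = 1)
    (hf : Measurable f) (hg : Measurable g) (hh : Measurable h)
    (hfgh : ∀ x y, f x ^ a * g y ^ b ≤ h (a • x + b • y))
    (hf₁ : ⨆ x, f x = 1) (hg₁ : ⨆ x, g x = 1) :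
    ENNReal.ofReal a * (∫⁻ x, f x) + ENNReal.ofReal b * ∫⁻ x, g x ≤ ∫⁻ x, h x := by
  have measurable_levels (u : ℝ → ℝ≥0∞) :
      Measurable fun t : ℝ ↦ volume {x | ENNReal.ofReal t < u x} :=
    Antitone.measurable fun s t hst ↦
      measure_mono fun x hx ↦ (ENNReal.ofReal_le_ofReal hst).trans_lt hx
  simp only [lintegral_eq_lintegral_Ioi_meas_ofReal_lt volume, hf, hg, hh]
  rw [← lintegral_const_mul _ (measurable_levels f), ← lintegral_const_mul _ (measurable_levels g),
    ← lintegral_add_left ((measurable_levels f).const_mul _)]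
  refine lintegral_mono fun t ↦ ?_
  rcases lt_or_ge (ENNReal.ofReal t) 1 with ht | ht
  · obtain ⟨x₀, hx₀⟩ := lt_iSup_iff.1 (hf₁ ▸ ht)
    obtain ⟨y₀, hy₀⟩ := lt_iSup_iff.1 (hg₁ ▸ ht)
    calc ENNReal.ofReal a * volume {x | ENNReal.ofReal t < f x}
          + ENNReal.ofReal b * volume {x | ENNReal.ofReal t < g x}
        ≤ volume (a • {x | ENNReal.ofReal t < f x} + b • {x | ENNReal.ofReal t < g x}) :=
          ofReal_mul_volume_add_le_volume_smul_add_smul ha.le hb.le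
            (measurableSet_lt measurable_const hf) (measurableSet_lt measurable_const hg)
            ⟨x₀, hx₀⟩ ⟨y₀, hy₀⟩
      _ ≤ volume {x | ENNReal.ofReal t < h x} :=
          measure_mono (smul_superlevel_add_smul_superlevel_subset ha hb hab hfgh _)
  · have hf_empty : {x | ENNReal.ofReal t < f x} = ∅ := by
      ext x
      simpa using (hf₁ ▸ le_iSup f x : f x ≤ 1).trans ht
    have hg_empty : {x | ENNReal.ofReal t < g x} = ∅ := by
      ext x
      simpa using (hg₁ ▸ le_iSup g x : g x ≤ 1).trans ht
    simp [hf_empty, hg_empty]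

theorem prekopaLeindler_real_of_iSup_ne_top (ha : 0 < a) (hb : 0 < b) (hab : a + b = 1)
    (hf : Measurable f) (hg : Measurable g) (hh : Measurable h)
    (hfgh : ∀ x y, f x ^ a * g y ^ b ≤ h (a • x + b • y))
    (hf_top : ⨆ x, f x ≠ ⊤) (hg_top : ⨆ x, g x ≠ ⊤) :
    (∫⁻ x, f x) ^ a * (∫⁻ x, g x) ^ b ≤ ∫⁻ x, h x := by
  set A := ⨆ x, f x
  set B := ⨆ x, g x
  obtain hA₀ | hA₀ := eq_or_ne A 0
  · simp [ENNReal.iSup_eq_zero.1 hA₀, ha]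
  obtain hB₀ | hB₀ := eq_or_ne B 0
  · simp [ENNReal.iSup_eq_zero.1 hB₀, hb]
  have mul_rpow_mul_rpow (x y : ℝ≥0∞) : (A⁻¹ ^ a * B⁻¹ ^ b) * (x ^ a * y ^ b) =
      (A⁻¹ * x) ^ a * (B⁻¹ * y) ^ b := by
    rw [ENNReal.mul_rpow_of_nonneg _ _ ha.le, ENNReal.mul_rpow_of_nonneg _ _ hb.le,
      mul_mul_mul_comm]
  have hc₀ : A⁻¹ ^ a * B⁻¹ ^ b ≠ 0 := by simp [ha.le, hb.le, hf_top, hg_top]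
  have hc_top : A⁻¹ ^ a * B⁻¹ ^ b ≠ ⊤ :=
    ENNReal.mul_ne_top (by simp [ha.le, hA₀]) (by simp [hb.le, hB₀])
  rw [← ENNReal.mul_le_mul_iff_right hc₀ hc_top, mul_rpow_mul_rpow, ← lintegral_const_mul _ hf,
    ← lintegral_const_mul _ hg, ← lintegral_const_mul _ hh]
  refine (rpow_mul_rpow_le_ofReal_mul_add ha hb hab _ _).trans
    (prekopaLeindler_real_of_iSup_eq_one ha hb hab (hf.const_mul _) (hg.const_mul _)
      (hh.const_mul _) (fun x y ↦ ?_) ?_ ?_)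
  · rw [← mul_rpow_mul_rpow]
    gcongr
    exact hfgh x y
  · rw [← ENNReal.mul_iSup, ENNReal.inv_mul_cancel hA₀ hf_top]
  · rw [← ENNReal.mul_iSup, ENNReal.inv_mul_cancel hB₀ hg_top]

theorem lintegral_rpow_eq_iSup_min_natCast {α : Type*} [MeasurableSpace α] {μ : Measure α}
    {f : α → ℝ≥0∞} (hf : Measurable f) (ha : 0 < a) :
    (∫⁻ x, f x ∂μ) ^ a = ⨆ N : ℕ, (∫⁻ x, min (f x) N ∂μ) ^ a := by
  have h_iSup : ∫⁻ x, f x ∂μ = ⨆ N : ℕ, ∫⁻ x, min (f x) N ∂μ := by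
    rw [← lintegral_iSup (fun N ↦ hf.min measurable_const)
      fun N M hNM x ↦ min_le_min_left _ (Nat.cast_le.2 hNM)]
    simp only [← inf_iSup_eq, ENNReal.iSup_natCast, inf_top_eq]
  rw [h_iSup]
  exact (ENNReal.orderIsoRpow a ha).map_iSup _

theorem prekopaLeindler_volume_real : PrekopaLeindler (volume : Measure ℝ) := by
  intro a b ha hb hab f g h hf hg hh hfgh
  have iSup_min_ne_top (u : ℝ → ℝ≥0∞) (N : ℕ) : ⨆ x, min (u x) N ≠ ⊤ :=
    ne_top_of_le_ne_top (ENNReal.natCast_ne_top N) (iSup_le fun x ↦ min_le_right _ _)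
  simp only [lintegral_rpow_eq_iSup_min_natCast hf ha, lintegral_rpow_eq_iSup_min_natCast hg hb,
    ENNReal.iSup_mul, ENNReal.mul_iSup]
  refine iSup₂_le fun M N ↦ prekopaLeindler_real_of_iSup_ne_top ha hb hab (hf.min measurable_const)
    (hg.min measurable_const) hh (fun x y ↦ ?_) (iSup_min_ne_top f N) (iSup_min_ne_top g M)
  calc min (f x) N ^ a * min (g y) M ^ b ≤ f x ^ a * g y ^ b := by
        gcongr <;> exact min_le_left _ _
    _ ≤ h (a • x + b • y) := hfgh x y

end RealLine

section Transfer

variable {E F : Type*} [AddCommGroup E] [Module ℝ E] [MeasurableSpace E]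
  [AddCommGroup F] [Module ℝ F] [MeasurableSpace F] {μ : Measure E} {ν : Measure F}

namespace PrekopaLeindler

theorem dirac (x : E) : PrekopaLeindler (Measure.dirac x) := by
  intro a b _ _ hab f g h hf hg hh hfgh
  simpa [lintegral_dirac', hf, hg, hh, ← add_smul, hab] using hfgh x x

theorem prod [SFinite ν] (hμ : PrekopaLeindler μ) (hν : PrekopaLeindler ν) :
    PrekopaLeindler (μ.prod ν) := by
  intro a b ha hb hab f g h hf hg hh hfgh
  simp only [lintegral_prod _ hf.aemeasurable, lintegral_prod _ hg.aemeasurable,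
    lintegral_prod _ hh.aemeasurable]
  refine hμ ha hb hab hf.lintegral_prod_right' hg.lintegral_prod_right' hh.lintegral_prod_right'
    fun x₁ x₂ ↦ ?_
  exact hν ha hb hab (by fun_prop) (by fun_prop) (by fun_prop) fun y₁ y₂ ↦
    hfgh (x₁, y₁) (x₂, y₂)

theorem map (hμ : PrekopaLeindler μ) {L : E →ₗ[ℝ] F} (hL : Measurable L) :
    PrekopaLeindler (μ.map L) := by
  intro a b ha hb hab f g h hf hg hh hfgh
  simp only [lintegral_map, hf, hg, hh, hL]
  exact hμ ha hb hab (hf.comp hL) (hg.comp hL) (hh.comp hL) fun x y ↦ by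
    simpa using hfgh (L x) (L y)

theorem const_smul (hμ : PrekopaLeindler μ) (c : ℝ≥0∞) : PrekopaLeindler (c • μ) := by
  intro a b ha hb hab f g h hf hg hh hfgh
  simp only [lintegral_smul_measure, smul_eq_mul]
  calc (c * ∫⁻ x, f x ∂μ) ^ a * (c * ∫⁻ x, g x ∂μ) ^ b
      = c * ((∫⁻ x, f x ∂μ) ^ a * (∫⁻ x, g x ∂μ) ^ b) := by
        rw [ENNReal.mul_rpow_of_nonneg _ _ ha.le, ENNReal.mul_rpow_of_nonneg _ _ hb.le,
          mul_mul_mul_comm, ← ENNReal.rpow_add_of_nonneg _ _ ha.le hb.le, hab, ENNReal.rpow_one]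
    _ ≤ c * ∫⁻ x, h x ∂μ := by
        gcongr
        exact hμ ha hb hab hf hg hh hfgh

end PrekopaLeindler

end Transfer

section Haar

variable {E F : Type*} [NormedAddCommGroup E] [NormedSpace ℝ E] [MeasurableSpace E] [BorelSpace E]
  [NormedAddCommGroup F] [NormedSpace ℝ F] [MeasurableSpace F] [BorelSpace F]
  [FiniteDimensional ℝ F]

theorem PrekopaLeindler.of_continuousLinearEquiv {μ : Measure E} [μ.IsAddHaarMeasure]
    (hμ : PrekopaLeindler μ) (L : E ≃L[ℝ] F) (ν : Measure F) [ν.IsAddHaarMeasure] :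
    PrekopaLeindler ν := by
  have := L.isAddHaarMeasure_map μ
  rw [Measure.isAddLeftInvariant_eq_smul ν (μ.map L)]
  exact (hμ.map (L := L.toLinearEquiv.toLinearMap) L.continuous.measurable).const_smul _

theorem prekopaLeindler_volume_pi (n : ℕ) :
    PrekopaLeindler (volume : Measure (Fin n → ℝ)) := by
  induction n with
  | zero =>
    rw [volume_pi, Measure.pi_of_empty]
    exact .dirac _
  | succ n ih =>
    exact (prekopaLeindler_volume_real.prod ih).of_continuousLinearEquiv
      (Fin.consEquivL ℝ fun _ ↦ ℝ) volume

theorem prekopaLeindler_of_isAddHaarMeasure (ν : Measure F) [ν.IsAddHaarMeasure] :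
    PrekopaLeindler ν :=
  (prekopaLeindler_volume_pi (finrank ℝ F)).of_continuousLinearEquiv
    (ContinuousLinearEquiv.ofFinrankEq (by simp)) ν

end Haar

section LogConcave

variable {E : Type*} [AddCommGroup E] [Module ℝ E]

/-- Log-concavity of an extended nonnegative density on any real vector space, in the multiplicative
form of `IsLogConcaveFun`, so that zeros of `ρ` need no separate treatment. -/
def LogConcave (ρ : E → ℝ≥0∞) : Prop :=
  ∀ ⦃a b : ℝ⦄, 0 < a → 0 < b → a + b = 1 → ∀ x y, ρ x ^ a * ρ y ^ b ≤ ρ (a • x + b • y)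

theorem logConcave_ofReal_exp_neg {ψ : E → ℝ} (hψ : ConvexOn ℝ univ ψ) :
    LogConcave fun x ↦ ENNReal.ofReal (exp (-ψ x)) := by
  intro a b ha hb hab x y
  rw [ENNReal.ofReal_rpow_of_pos (exp_pos _), ENNReal.ofReal_rpow_of_pos (exp_pos _),
    ← ENNReal.ofReal_mul (by positivity), ← exp_mul, ← exp_mul, ← exp_add]
  refine ENNReal.ofReal_le_ofReal (exp_le_exp.2 ?_)
  have h := hψ.2 (mem_univ x) (mem_univ y) ha.le hb.le hab
  simp only [smul_eq_mul] at h
  linarith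

theorem LogConcave.rpow_dilate_mul_le {ρ : E → ℝ≥0∞} (hρ : LogConcave ρ) {a b α β : ℝ}
    (ha : 0 < a) (hb : 0 < b) (hα : 0 < α) (hβ : 0 < β) (x y : E) :
    (ρ (α⁻¹ • x) ^ α) ^ a * (ρ (β⁻¹ • y) ^ β) ^ b ≤
      ρ ((a * α + b * β)⁻¹ • (a • x + b • y)) ^ (a * α + b * β) := by
  set γ := a * α + b * β with hγ
  have hγ₀ : 0 < γ := by positivity
  calc (ρ (α⁻¹ • x) ^ α) ^ a * (ρ (β⁻¹ • y) ^ β) ^ b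
      = (ρ (α⁻¹ • x) ^ (a * α / γ) * ρ (β⁻¹ • y) ^ (b * β / γ)) ^ γ := by
        rw [ENNReal.mul_rpow_of_nonneg _ _ hγ₀.le, ← ENNReal.rpow_mul, ← ENNReal.rpow_mul,
          ← ENNReal.rpow_mul, ← ENNReal.rpow_mul, div_mul_cancel₀ _ hγ₀.ne',
          div_mul_cancel₀ _ hγ₀.ne', mul_comm α, mul_comm β]
    _ ≤ ρ ((a * α / γ) • α⁻¹ • x + (b * β / γ) • β⁻¹ • y) ^ γ := by
        gcongr
        exact hρ (by positivity) (by positivity) (by rw [← add_div, ← hγ, div_self hγ₀.ne']) _ _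
    _ = ρ (γ⁻¹ • (a • x + b • y)) ^ γ := by
        have hx : a * α / γ * α⁻¹ = γ⁻¹ * a := by field_simp
        have hy : b * β / γ * β⁻¹ = γ⁻¹ * b := by field_simp
        rw [smul_add, smul_smul, smul_smul, smul_smul, smul_smul, hx, hy]

end LogConcave

section DilatedPower

variable {E : Type*} [AddCommGroup E] [Module ℝ E] [MeasurableSpace E]

/-- The integral of the `α`-th power of the density `ρ` dilated by `α`. By scaling it is
`α ^ n * ∫ ρ ^ α` in dimension `n`; in this form log-concavity in `α` is an instance of the
Prékopa–Leindler inequality. -/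
noncomputable def dilatedPowerIntegral (ρ : E → ℝ≥0∞) (ν : Measure E) (α : ℝ) : ℝ≥0∞ :=
  ∫⁻ x, ρ (α⁻¹ • x) ^ α ∂ν

theorem dilatedPowerIntegral_one (ρ : E → ℝ≥0∞) (ν : Measure E) :
    dilatedPowerIntegral ρ ν 1 = ∫⁻ x, ρ x ∂ν := by
  simp [dilatedPowerIntegral]

variable {ν : Measure E} {ρ : E → ℝ≥0∞}

theorem LogConcave.dilatedPowerIntegral_rpow_mul_le [MeasurableConstSMul ℝ E]
    (hlc : LogConcave ρ) (hν : PrekopaLeindler ν) (hρ : Measurable ρ) {a b α β : ℝ}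
    (ha : 0 < a) (hb : 0 < b) (hab : a + b = 1) (hα : 0 < α) (hβ : 0 < β) :
    dilatedPowerIntegral ρ ν α ^ a * dilatedPowerIntegral ρ ν β ^ b ≤
      dilatedPowerIntegral ρ ν (a * α + b * β) :=
  hν ha hb hab (by fun_prop) (by fun_prop) (by fun_prop) (hlc.rpow_dilate_mul_le ha hb hα hβ)

end DilatedPower

section InformationContent

variable {Ω : Type*} {ρ : Ω → ℝ≥0∞}

/-- The information content (surprisal) `-log ρ` of a point under the density `ρ`, whose variance is
the varentropy; it takes the junk value `0` where `ρ` is `0` or `∞`. -/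
noncomputable def informationContent (ρ : Ω → ℝ≥0∞) (x : Ω) : ℝ := -log (ρ x).toReal

theorem mul_ofReal_exp_informationContent {s : ℝ} (hs : s < 1) {x : Ω} (hx : ρ x ≠ ⊤) :
    ρ x * ENNReal.ofReal (exp (s * informationContent ρ x)) = ρ x ^ (1 - s) := by
  obtain h₀ | h₀ := eq_or_ne (ρ x) 0
  · simp [h₀, hs]
  have hpos : 0 < (ρ x).toReal := ENNReal.toReal_pos h₀ hx
  have hexp : exp (s * informationContent ρ x) = (ρ x).toReal ^ (-s) := by
    rw [rpow_def_of_pos hpos, informationContent, mul_neg, mul_neg, mul_comm]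
  rw [hexp, ← ENNReal.ofReal_rpow_of_pos hpos, ENNReal.ofReal_toReal hx, sub_eq_add_neg,
    ENNReal.rpow_add _ _ h₀ hx, ENNReal.rpow_one]

variable [MeasurableSpace Ω] {ν : Measure Ω}

theorem measurable_informationContent (hρ : Measurable ρ) : Measurable (informationContent ρ) :=
  (measurable_log.comp hρ.ennreal_toReal).neg

theorem lintegral_exp_informationContent (hρ : Measurable ρ) (hfin : ∀ᵐ x ∂ν, ρ x ≠ ⊤) {s : ℝ}
    (hs : s < 1) :
    ∫⁻ x, ENNReal.ofReal (exp (s * informationContent ρ x)) ∂ν.withDensity ρ =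
      ∫⁻ x, ρ x ^ (1 - s) ∂ν := by
  have := measurable_informationContent hρ
  rw [lintegral_withDensity_eq_lintegral_mul _ hρ (by fun_prop)]
  refine lintegral_congr_ae ?_
  filter_upwards [hfin] with x hx using mul_ofReal_exp_informationContent hs hx

end InformationContent

theorem deriv_deriv_nonpos_of_concaveOn {f : ℝ → ℝ} {s : Set ℝ} {x : ℝ} (hf : ConcaveOn ℝ s f)
    (hfd : ∀ y ∈ s, DifferentiableAt ℝ f y) (hx : s ∈ 𝓝 x) : deriv (deriv f) x ≤ 0 := by
  rw [← derivWithin_of_mem_nhds hx]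
  exact (hf.antitoneOn_deriv hfd).derivWithin_nonpos

section Cumulant

variable {Ω : Type*} [MeasurableSpace Ω] {μ : Measure Ω} [IsProbabilityMeasure μ] {X : Ω → ℝ}

theorem deriv_deriv_cgf_zero (hX : 0 ∈ interior (integrableExpSet X μ)) :
    deriv (deriv (cgf X μ)) 0 = Var[X; μ] := by
  have h := iteratedDeriv_two_cgf_eq_integral hX
  rw [deriv_cgf_zero hX] at h
  rw [variance_eq_integral (aemeasurable_of_mem_interior_integrableExpSet hX)]
  simpa [iteratedDeriv_succ] using h

theorem variance_le_of_concaveOn_cgf_add_log {c : ℝ} {s : Set ℝ} (hs : s ∈ 𝓝 0)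
    (hs_lt : s ⊆ Iio 1) (hsX : s ⊆ interior (integrableExpSet X μ))
    (hconc : ConcaveOn ℝ s fun t ↦ cgf X μ t + c * log (1 - t)) : Var[X; μ] ≤ c := by
  have hasDerivAt_log {t : ℝ} (ht : t ∈ s) :
      HasDerivAt (fun t ↦ c * log (1 - t)) (c * (-1 / (1 - t))) t :=
    (((hasDerivAt_id t).const_sub 1).log (sub_pos.2 (hs_lt ht)).ne').const_mul c
  have hasDerivAt_cgf_add_log {t : ℝ} (ht : t ∈ s) :
      HasDerivAt (fun t ↦ cgf X μ t + c * log (1 - t))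
        (deriv (cgf X μ) t + c * (-1 / (1 - t))) t :=
    (analyticAt_cgf (hsX ht)).differentiableAt.hasDerivAt.add (hasDerivAt_log ht)
  have hX₀ : 0 ∈ interior (integrableExpSet X μ) := hsX (mem_of_mem_nhds hs)
  have hasDerivAt_deriv : HasDerivAt (fun t ↦ deriv (cgf X μ) t + c * (-1 / (1 - t)))
      (Var[X; μ] - c) 0 := by
    have hlog : HasDerivAt (fun t : ℝ ↦ c * (-1 / (1 - t))) (-c) 0 := by
      simpa using ((hasDerivAt_const (0 : ℝ) (-1 : ℝ)).fun_div
        ((hasDerivAt_id (0 : ℝ)).const_sub 1) (by simp)).const_mul c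
    rw [← deriv_deriv_cgf_zero hX₀, sub_eq_add_neg]
    exact (analyticAt_cgf hX₀).deriv.differentiableAt.hasDerivAt.add hlog
  have h := deriv_deriv_nonpos_of_concaveOn hconc
    (fun t ht ↦ (hasDerivAt_cgf_add_log ht).differentiableAt) hs
  have hderiv : deriv (fun t ↦ cgf X μ t + c * log (1 - t)) =ᶠ[𝓝 0]
      fun t ↦ deriv (cgf X μ) t + c * (-1 / (1 - t)) :=
    eventually_of_mem hs fun t ht ↦ (hasDerivAt_cgf_add_log ht).deriv
  rw [hderiv.deriv_eq, hasDerivAt_deriv.deriv] at h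
  linarith

end Cumulant

theorem convexOn_univ_of_comp_line {E : Type*} [AddCommGroup E] [Module ℝ E] {f : E → ℝ}
    (h : ∀ x v, ConvexOn ℝ univ fun t : ℝ ↦ f (x + t • v)) :
    ConvexOn ℝ univ f := by
  refine ⟨convex_univ, fun x _ y _ a b ha hb hab ↦ ?_⟩
  obtain rfl : a = 1 - b := by linarith
  have hline := (h x (y - x)).2 (mem_univ 0) (mem_univ 1) ha hb hab
  have hpoint : (1 - b) • x + b • y = x + b • (y - x) := by module
  simpa [hpoint] using hline

theorem convexOn_univ_of_iteratedFDeriv_two_nonneg {E : Type*} [NormedAddCommGroup E]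
    [NormedSpace ℝ E] {f : E → ℝ} (hf : ContDiff ℝ 2 f)
    (hf₂ : ∀ x v, 0 ≤ iteratedFDeriv ℝ 2 f x ![v, v]) : ConvexOn ℝ univ f := by
  refine convexOn_univ_of_comp_line fun x v ↦ ?_
  have hasDerivAt_line (t : ℝ) : HasDerivAt (fun t : ℝ ↦ x + t • v) v t := by
    simpa using ((hasDerivAt_id t).smul_const v).const_add x
  have hasDerivAt_comp_line (t : ℝ) :
      HasDerivAt (fun t : ℝ ↦ f (x + t • v)) (fderiv ℝ f (x + t • v) v) t :=
    (hf.differentiable two_ne_zero _).hasFDerivAt.comp_hasDerivAt t (hasDerivAt_line t)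
  have hasDerivAt_fderiv_line (t : ℝ) : HasDerivAt (fun t : ℝ ↦ fderiv ℝ f (x + t • v) v)
      (iteratedFDeriv ℝ 2 f (x + t • v) ![v, v]) t := by
    have hf' : Differentiable ℝ (fderiv ℝ f) :=
      (hf.fderiv_right (m := 1) le_rfl).differentiable one_ne_zero
    have h := ((hf' _).hasFDerivAt.comp_hasDerivAt t (hasDerivAt_line t)).clm_apply
      (hasDerivAt_const t v)
    simpa [iteratedFDeriv_two_apply] using h
  have hderiv : deriv (fun t : ℝ ↦ f (x + t • v)) = fun t ↦ fderiv ℝ f (x + t • v) v :=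
    funext fun t ↦ (hasDerivAt_comp_line t).deriv
  refine convexOn_univ_of_deriv2_nonneg (fun t ↦ (hasDerivAt_comp_line t).differentiableAt) ?_ ?_
  · exact hderiv ▸ fun t ↦ (hasDerivAt_fderiv_line t).differentiableAt
  · intro t
    simpa [hderiv, (hasDerivAt_fderiv_line t).deriv] using hf₂ (x + t • v) v

section Varentropy

variable {E : Type*} [NormedAddCommGroup E] [NormedSpace ℝ E] [FiniteDimensional ℝ E]
  [MeasurableSpace E] [BorelSpace E] {ν : Measure E} [ν.IsAddHaarMeasure] {ρ : E → ℝ≥0∞}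

theorem dilatedPowerIntegral_eq (hρ : Measurable ρ) {α : ℝ} (hα : 0 < α) :
    dilatedPowerIntegral ρ ν α = ENNReal.ofReal (α ^ finrank ℝ E) * ∫⁻ x, ρ x ^ α ∂ν := by
  have h := lintegral_map (μ := ν) (hρ.pow_const α) (measurable_const_smul α⁻¹)
  rw [Measure.map_addHaar_smul ν (inv_ne_zero hα.ne'), lintegral_smul_measure] at h
  rw [dilatedPowerIntegral, ← h, smul_eq_mul, inv_pow, inv_inv, abs_of_nonneg (by positivity)]

theorem dilatedPowerIntegral_ne_zero (hρ : Measurable ρ) (hρ₀ : ∫⁻ x, ρ x ∂ν ≠ 0) {α : ℝ}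
    (hα : 0 < α) : dilatedPowerIntegral ρ ν α ≠ 0 := by
  have hpow : ∫⁻ x, ρ x ^ α ∂ν ≠ 0 := by
    contrapose! hρ₀
    rw [lintegral_eq_zero_iff (by fun_prop)] at hρ₀ ⊢
    filter_upwards [hρ₀] with x hx using (ENNReal.rpow_eq_zero_iff_of_pos hα).1 hx
  rw [dilatedPowerIntegral_eq hρ hα]
  exact mul_ne_zero (by simpa using pow_pos hα _) hpow

theorem LogConcave.dilatedPowerIntegral_ne_top (hlc : LogConcave ρ) (hρ : Measurable ρ)
    (hρ₀ : ∫⁻ x, ρ x ∂ν ≠ 0) (hρ_top : ∫⁻ x, ρ x ∂ν ≠ ⊤) {α : ℝ} (hα : α ∈ Ioo 0 2) :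
    dilatedPowerIntegral ρ ν α ≠ ⊤ := by
  have hα' : 0 < 2 - α := sub_pos.2 hα.2
  have hmid : dilatedPowerIntegral ρ ν α ^ (1 / 2 : ℝ) *
      dilatedPowerIntegral ρ ν (2 - α) ^ (1 / 2 : ℝ) ≤ ∫⁻ x, ρ x ∂ν := by
    have h := hlc.dilatedPowerIntegral_rpow_mul_le (prekopaLeindler_of_isAddHaarMeasure ν) hρ
      one_half_pos one_half_pos (add_halves 1) hα.1 hα'
    rwa [show 1 / 2 * α + 1 / 2 * (2 - α) = 1 by ring, dilatedPowerIntegral_one] at h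
  intro htop
  rw [htop, ENNReal.top_rpow_of_pos one_half_pos, ENNReal.top_mul, top_le_iff] at hmid
  · exact hρ_top hmid
  · simp [dilatedPowerIntegral_ne_zero hρ hρ₀ hα']

theorem LogConcave.concaveOn_log_dilatedPowerIntegral (hlc : LogConcave ρ) (hρ : Measurable ρ)
    (hρ₀ : ∫⁻ x, ρ x ∂ν ≠ 0) (hρ_top : ∫⁻ x, ρ x ∂ν ≠ ⊤) :
    ConcaveOn ℝ (Ioo 0 2) fun α ↦ log (dilatedPowerIntegral ρ ν α).toReal := by
  have ne_top {α : ℝ} (hα : α ∈ Ioo 0 2) := hlc.dilatedPowerIntegral_ne_top hρ hρ₀ hρ_top hα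
  have toReal_pos {α : ℝ} (hα : α ∈ Ioo 0 2) : 0 < (dilatedPowerIntegral ρ ν α).toReal :=
    ENNReal.toReal_pos (dilatedPowerIntegral_ne_zero hρ hρ₀ hα.1) (ne_top hα)
  refine concaveOn_iff_forall_pos.2 ⟨convex_Ioo 0 2, fun α hα β hβ a b ha hb hab ↦ ?_⟩
  have hγ : a * α + b * β ∈ Ioo 0 2 := convex_Ioo 0 2 hα hβ ha.le hb.le hab
  have h := ENNReal.toReal_mono (ne_top hγ) <| hlc.dilatedPowerIntegral_rpow_mul_le
    (prekopaLeindler_of_isAddHaarMeasure ν) hρ ha hb hab hα.1 hβ.1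
  rw [ENNReal.toReal_mul, ← ENNReal.toReal_rpow, ← ENNReal.toReal_rpow] at h
  have hα_pos := rpow_pos_of_pos (toReal_pos hα) a
  have hβ_pos := rpow_pos_of_pos (toReal_pos hβ) b
  simpa [log_mul hα_pos.ne' hβ_pos.ne', log_rpow, toReal_pos hα, toReal_pos hβ] using
    log_le_log (mul_pos hα_pos hβ_pos) h

theorem dilatedPowerIntegral_one_sub (hρ : Measurable ρ) (hρ_top : ∫⁻ x, ρ x ∂ν ≠ ⊤) {t : ℝ}
    (ht : t < 1) : dilatedPowerIntegral ρ ν (1 - t) = ENNReal.ofReal ((1 - t) ^ finrank ℝ E) *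
      ∫⁻ x, ENNReal.ofReal (exp (t * informationContent ρ x)) ∂ν.withDensity ρ := by
  have hfin : ∀ᵐ x ∂ν, ρ x ≠ ⊤ := (ae_lt_top hρ hρ_top).mono fun _ ↦ ne_of_lt
  rw [dilatedPowerIntegral_eq hρ (sub_pos.2 ht), lintegral_exp_informationContent hρ hfin ht]

theorem LogConcave.integrable_exp_informationContent (hlc : LogConcave ρ) (hρ : Measurable ρ)
    (hρ₀ : ∫⁻ x, ρ x ∂ν ≠ 0) (hρ_top : ∫⁻ x, ρ x ∂ν ≠ ⊤) {t : ℝ} (ht : t ∈ Ioo (-1) 1) :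
    Integrable (fun x ↦ exp (t * informationContent ρ x)) (ν.withDensity ρ) := by
  have := measurable_informationContent hρ
  rw [← lintegral_ofReal_ne_top_iff_integrable (by fun_prop) (ae_of_all _ fun x ↦ (exp_pos _).le)]
  have h := hlc.dilatedPowerIntegral_ne_top hρ hρ₀ hρ_top (α := 1 - t)
    ⟨by linarith [ht.2], by linarith [ht.1]⟩
  rw [dilatedPowerIntegral_one_sub hρ hρ_top ht.2] at h
  refine fun htop ↦ h ?_
  rw [htop, ENNReal.mul_top (by simpa using pow_pos (sub_pos.2 ht.2) _)]

theorem log_dilatedPowerIntegral_one_sub (hρ : Measurable ρ) (hρ₀ : ∫⁻ x, ρ x ∂ν ≠ 0)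
    (hρ_top : ∫⁻ x, ρ x ∂ν ≠ ⊤) {t : ℝ} (ht : t < 1)
    (hint : Integrable (fun x ↦ exp (t * informationContent ρ x)) (ν.withDensity ρ)) :
    log (dilatedPowerIntegral ρ ν (1 - t)).toReal =
      cgf (informationContent ρ) (ν.withDensity ρ) t + finrank ℝ E * log (1 - t) := by
  have ht' : 0 < (1 - t) ^ finrank ℝ E := pow_pos (sub_pos.2 ht) _
  have hμ : ν.withDensity ρ ≠ 0 := by
    rwa [← Measure.measure_univ_ne_zero, withDensity_apply _ .univ, setLIntegral_univ]
  have hmgf : 0 < mgf (informationContent ρ) (ν.withDensity ρ) t :=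
    mgf_pos' hμ hint
  rw [dilatedPowerIntegral_one_sub hρ hρ_top ht, ENNReal.toReal_mul, ENNReal.toReal_ofReal ht'.le,
    ← integral_eq_lintegral_of_nonneg_ae (ae_of_all _ fun x ↦ (exp_pos _).le)
      hint.aestronglyMeasurable]
  change log (_ * mgf (informationContent ρ) (ν.withDensity ρ) t) = _
  rw [log_mul ht'.ne' hmgf.ne', log_pow, add_comm, cgf]

theorem LogConcave.concaveOn_cgf_informationContent_add_log (hlc : LogConcave ρ)
    (hρ : Measurable ρ) (hρ₀ : ∫⁻ x, ρ x ∂ν ≠ 0) (hρ_top : ∫⁻ x, ρ x ∂ν ≠ ⊤) :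
    ConcaveOn ℝ (Ioo (-1) 1) fun t ↦
      cgf (informationContent ρ) (ν.withDensity ρ) t + finrank ℝ E * log (1 - t) := by
  have h := (hlc.concaveOn_log_dilatedPowerIntegral hρ hρ₀ hρ_top).comp_affineMap
    (AffineMap.lineMap (1 : ℝ) 0)
  have hpre : AffineMap.lineMap (1 : ℝ) (0 : ℝ) ⁻¹' Ioo 0 2 = Ioo (-1 : ℝ) 1 := by
    ext t
    simp only [mem_preimage, mem_Ioo, AffineMap.lineMap_apply, vsub_eq_sub, vadd_eq_add,
      smul_eq_mul]
    grind
  rw [hpre] at h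
  refine h.congr fun t ht ↦ ?_
  rw [← log_dilatedPowerIntegral_one_sub hρ hρ₀ hρ_top ht.2
    (hlc.integrable_exp_informationContent hρ hρ₀ hρ_top ht)]
  simp [AffineMap.lineMap_apply, neg_add_eq_sub]

theorem varentropy_bound_general (hlc : LogConcave ρ) (hρ : Measurable ρ)
    [IsProbabilityMeasure (ν.withDensity ρ)] :
    MemLp (informationContent ρ) 2 (ν.withDensity ρ) ∧
      Var[informationContent ρ; ν.withDensity ρ] ≤ finrank ℝ E := by
  have hmass : ∫⁻ x, ρ x ∂ν = 1 := by
    rw [← setLIntegral_univ, ← withDensity_apply _ .univ, measure_univ]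
  have hρ₀ : ∫⁻ x, ρ x ∂ν ≠ 0 := hmass ▸ one_ne_zero
  have hρ_top : ∫⁻ x, ρ x ∂ν ≠ ⊤ := hmass ▸ ENNReal.one_ne_top
  have hsub : Ioo (-1) 1 ⊆ interior (integrableExpSet (informationContent ρ) (ν.withDensity ρ)) :=
    interior_maximal (fun t ↦ hlc.integrable_exp_informationContent hρ hρ₀ hρ_top) isOpen_Ioo
  have hzero : Ioo (-1) 1 ∈ 𝓝 (0 : ℝ) := Ioo_mem_nhds (by simp) one_pos
  exact ⟨memLp_of_mem_interior_integrableExpSet (hsub (mem_of_mem_nhds hzero)) 2,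
    variance_le_of_concaveOn_cgf_add_log hzero (fun _ ht ↦ ht.2) hsub
      (hlc.concaveOn_cgf_informationContent_add_log hρ hρ₀ hρ_top)⟩

end Varentropy

/-- Varentropy inequality: for a regular log-concave density `e^{−ψ}`,
`Var_μ(ψ) ≤ n`. -/
theorem varentropy_bound {n : ℕ} (μ : Measure (Euc n)) [IsProbabilityMeasure μ]
    (ψ : Euc n → ℝ) (hreg : IsRegularMeasure μ ψ) :
    (∫ x, ψ x ^ 2 ∂μ) - (∫ x, ψ x ∂μ) ^ 2 ≤ (n : ℝ) := by
  obtain ⟨⟨hψ, ⟨ε, hε, hess⟩, -⟩, rfl⟩ := hreg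
  have hconvex : ConvexOn ℝ univ ψ := convexOn_univ_of_iteratedFDeriv_two_nonneg
    (hψ.of_le (WithTop.coe_le_coe.2 le_top)) fun x v ↦ le_trans (by positivity) (hess x v).1
  have hcontent : informationContent (fun x ↦ ENNReal.ofReal (exp (-ψ x))) = ψ := by
    ext x
    simp [informationContent, (exp_pos _).le]
  have hmeas : Measurable fun x ↦ ENNReal.ofReal (exp (-ψ x)) := by
    have := hψ.continuous.measurable
    fun_prop
  obtain ⟨hLp, hvar⟩ :=
    varentropy_bound_general (ν := volume) (logConcave_ofReal_exp_neg hconvex) hmeas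
  rw [hcontent] at hLp hvar
  simpa [variance_eq_sub hLp, finrank_euclideanSpace] using hvar
end

section
/- Let μ be a probability measure on ℝⁿ with a regular, log-concave density ρ = e^{−ψ}, let t > 0, and let u be a μ-tempered function. For θ ∈ ℝⁿ let μ_{t,θ} be the probability measure with density p_{t,θ}(x) = e^{⟨θ,x⟩ − t|x|²/2} ρ(x)/Z(t,θ), write p_{t,θ} = e^{−ψ_{t,θ}}, and let L u = Δ u − ⟨∇ψ, ∇u⟩ and L_{t,θ} u = Δ u − ⟨∇ψ_{t,θ}, ∇u⟩. Let X be a random vector with law μ and W an independent Gaussian random vector in ℝⁿ with mean 0 and covariance t·Id, and set θ_t = tX + W, μ_t = μ_{t,θ_t}, L_t = L_{t,θ_t}. Then almost surely u is μ_t-tempered, and ∫ (L u)² dμ + t ∫ |∇u|² dμ = E ∫ (L_t u)² dμ_t. -/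
open MeasureTheory Real
open scoped ENNReal RealInnerProductSpace

/-!
Write `μ = e^{-ψ} dx` and `θ_t = tX + W`. By Bayes' rule, `μ_t` is the conditional law of `X` given
`θ_t`. Since `∇ψ_{t,θ}(y) = ∇ψ(y) - (θ - t y)`, we have `L_{t,θ} u(y) = L u(y) + ⟨∇u(y), θ - t y⟩`,
so the tower property turns `E ∫ (L_t u)² dμ_t` into `E (L u(X) + ⟨∇u(X), W⟩)²`; integrating out the
independent Gaussian `W` leaves `E (L u(X))² + t E |∇u(X)|²`. Temperedness passes to `μ_t` because
completing the square bounds the tilt `e^{⟨θ,x⟩ - t|x|²/2}` by `e^{|θ|²/(2t)}`.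
-/

open ProbabilityTheory

/-! ### Subexponential decay -/

section SubexponentialDecay

variable {E F G : Type*} [NormedAddCommGroup E] [NormedAddCommGroup F] [NormedAddCommGroup G]

/-- Subexponential decay of `g` relative to a density `ρ`: the bound that `IsTempered` imposes on
all derivatives. -/
def HasSubexpDecay (ρ : E → ℝ) (g : E → F) : Prop :=
  ∃ C : ℝ, 0 < C ∧ ∃ a : ℝ, 0 < a ∧ ∀ x, ‖g x‖ ≤ C / √(ρ x) * exp (-a * ‖x‖)

lemma IsTempered.hasSubexpDecay {n : ℕ} {ρ u : Euc n → ℝ} (hu : IsTempered ρ u) (m : ℕ) :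
    HasSubexpDecay ρ (iteratedFDeriv ℝ m u) :=
  hu.2 m

lemma one_add_pow_mul_exp_neg_mul_le (k : ℕ) {b r : ℝ} (hb : 0 < b) (hr : 0 ≤ r) :
    (1 + r) ^ k * exp (-b * r) ≤ k.factorial / b ^ k * exp b := by
  have h := pow_div_factorial_le_exp (b * (1 + r)) (by positivity) k
  rw [mul_pow, div_le_iff₀ (by positivity)] at h
  rw [neg_mul, exp_neg, ← div_eq_mul_inv, div_le_iff₀ (exp_pos _), mul_assoc, ← exp_add,
    div_mul_eq_mul_div, le_div_iff₀ (by positivity)]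
  calc (1 + r) ^ k * b ^ k = b ^ k * (1 + r) ^ k := mul_comm _ _
    _ ≤ exp (b * (1 + r)) * k.factorial := h
    _ = k.factorial * exp (b + b * r) := by rw [mul_add, mul_one, mul_comm]

namespace HasSubexpDecay

variable {ρ ρ' : E → ℝ} {g : E → F}

lemma of_norm_le_mul_pow_mul (hg : HasSubexpDecay ρ g) {h : E → G} {C : ℝ} {k : ℕ}
    (hh : ∀ x, ‖h x‖ ≤ C * (1 + ‖x‖) ^ k * ‖g x‖) : HasSubexpDecay ρ h := by
  obtain ⟨A, hA, a, ha, hg⟩ := hg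
  set M := k.factorial / (a / 2) ^ k * exp (a / 2)
  refine ⟨(|C| + 1) * A * M, by positivity, a / 2, by positivity, fun x => ?_⟩
  have hsplit : exp (-a * ‖x‖) = exp (-(a / 2) * ‖x‖) * exp (-(a / 2) * ‖x‖) := by
    rw [← exp_add]; ring_nf
  calc ‖h x‖ ≤ C * (1 + ‖x‖) ^ k * ‖g x‖ := hh x
    _ ≤ (|C| + 1) * (1 + ‖x‖) ^ k * (A / √(ρ x) * exp (-a * ‖x‖)) := by
        gcongr
        · linarith [le_abs_self C]
        · exact hg x
    _ = (|C| + 1) * (A / √(ρ x)) * ((1 + ‖x‖) ^ k * exp (-(a / 2) * ‖x‖))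
          * exp (-(a / 2) * ‖x‖) := by rw [hsplit]; ring
    _ ≤ (|C| + 1) * (A / √(ρ x)) * M * exp (-(a / 2) * ‖x‖) := by
        gcongr
        exact one_add_pow_mul_exp_neg_mul_le k (half_pos ha) (norm_nonneg x)
    _ = (|C| + 1) * A * M / √(ρ x) * exp (-(a / 2) * ‖x‖) := by ring

lemma sub (hg : HasSubexpDecay ρ g) {h : E → F} (hh : HasSubexpDecay ρ h) :
    HasSubexpDecay ρ (fun x => g x - h x) := by
  obtain ⟨A, hA, a, ha, hg⟩ := hg
  obtain ⟨B, hB, b, hb, hh⟩ := hh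
  refine ⟨A + B, by positivity, min a b, lt_min ha hb, fun x => ?_⟩
  calc ‖g x - h x‖ ≤ ‖g x‖ + ‖h x‖ := norm_sub_le _ _
    _ ≤ A / √(ρ x) * exp (-a * ‖x‖) + B / √(ρ x) * exp (-b * ‖x‖) := add_le_add (hg x) (hh x)
    _ ≤ A / √(ρ x) * exp (-(min a b) * ‖x‖) + B / √(ρ x) * exp (-(min a b) * ‖x‖) := by
        gcongr
        · exact min_le_left a b
        · exact min_le_right a b
    _ = (A + B) / √(ρ x) * exp (-(min a b) * ‖x‖) := by ring

lemma of_density_le (hg : HasSubexpDecay ρ g) {K : ℝ} (hK : 0 < K) (hρ' : ∀ x, 0 < ρ' x)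
    (hle : ∀ x, ρ' x ≤ K * ρ x) : HasSubexpDecay ρ' g := by
  obtain ⟨A, hA, a, ha, hg⟩ := hg
  refine ⟨A * √K, by positivity, a, ha, fun x => (hg x).trans ?_⟩
  have hρ : 0 < ρ x := pos_of_mul_pos_right ((hρ' x).trans_le (hle x)) hK.le
  gcongr ?_ * _
  rw [div_le_div_iff₀ (sqrt_pos.2 hρ) (sqrt_pos.2 (hρ' x)), mul_assoc, ← sqrt_mul hK.le]
  gcongr
  exact hle x

end HasSubexpDecay

variable [NormedSpace ℝ E] [FiniteDimensional ℝ E] [MeasurableSpace E] [BorelSpace E]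
  (ν : Measure E) [ν.IsAddHaarMeasure]

lemma integrable_exp_neg_mul_norm {b : ℝ} (hb : 0 < b) :
    Integrable (fun x : E => exp (-b * ‖x‖)) ν := by
  set N := Module.finrank ℝ E + 1
  have hN : (Module.finrank ℝ E : ℝ) < (N : ℕ) := by exact_mod_cast Nat.lt_succ_self _
  refine ((integrable_one_add_norm (μ := ν) hN).const_mul
    (N.factorial / b ^ N * exp b)).mono' (by fun_prop) (.of_forall fun x => ?_)
  rw [norm_of_nonneg (exp_pos _).le, rpow_neg (by positivity), rpow_natCast, ← div_eq_mul_inv,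
    le_div_iff₀ (by positivity), mul_comm]
  exact one_add_pow_mul_exp_neg_mul_le N hb (norm_nonneg x)

lemma HasSubexpDecay.memLp_two_withDensity {ρ : E → ℝ} (hρ : Measurable ρ) (hρ0 : ∀ x, 0 ≤ ρ x)
    {g : E → F} (hgm : AEStronglyMeasurable g ν) (hg : HasSubexpDecay ρ g) :
    MemLp g 2 (ν.withDensity fun x => ENNReal.ofReal (ρ x)) := by
  obtain ⟨A, hA, a, ha, hg⟩ := hg
  rw [memLp_two_iff_integrable_sq_norm (hgm.mono_ac (withDensity_absolutelyContinuous _ _)),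
    integrable_withDensity_iff_integrable_smul' (by fun_prop) (by simp)]
  simp only [ENNReal.toReal_ofReal (hρ0 _), smul_eq_mul]
  refine ((integrable_exp_neg_mul_norm ν (b := 2 * a) (by positivity)).const_mul (A ^ 2)).mono'
    (hρ.aestronglyMeasurable.mul (hgm.norm.pow 2)) (.of_forall fun x => ?_)
  have hroot : √(ρ x) * ‖g x‖ ≤ A * exp (-a * ‖x‖) := by
    rcases (sqrt_nonneg (ρ x)).eq_or_lt with h0 | hpos
    · rw [← h0, zero_mul]
      positivity
    · have := hg x
      rwa [div_mul_eq_mul_div, le_div_iff₀ hpos, mul_comm] at this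
  rw [norm_of_nonneg (mul_nonneg (hρ0 x) (sq_nonneg _))]
  calc ρ x * ‖g x‖ ^ 2 = (√(ρ x) * ‖g x‖) ^ 2 := by rw [mul_pow, sq_sqrt (hρ0 x)]
    _ ≤ (A * exp (-a * ‖x‖)) ^ 2 := by gcongr
    _ = A ^ 2 * exp (-(2 * a) * ‖x‖) := by rw [mul_pow, ← exp_nat_mul]; push_cast; ring_nf

end SubexponentialDecay

/-! ### The operator `L` -/

section Operator

variable {n : ℕ}

lemma norm_gradient_eq_norm_iteratedFDeriv_one {E : Type*} [NormedAddCommGroup E]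
    [InnerProductSpace ℝ E] [CompleteSpace E] (f : E → ℝ) (x : E) :
    ‖gradient f x‖ = ‖iteratedFDeriv ℝ 1 f x‖ := by
  rw [norm_iteratedFDeriv_one, ← toDual_gradient, LinearIsometryEquiv.norm_map]

lemma measurable_gradient {E : Type*} [NormedAddCommGroup E] [InnerProductSpace ℝ E]
    [CompleteSpace E] [MeasurableSpace E] [BorelSpace E] (f : E → ℝ) :
    Measurable (gradient f) :=
  (InnerProductSpace.toDual ℝ E).symm.continuous.measurable.comp (measurable_fderiv ℝ f)

lemma continuous_lap {u : Euc n → ℝ} (hu : ContDiff ℝ 2 u) : Continuous (lap u) := by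
  have : Continuous (iteratedFDeriv ℝ 2 u) := hu.continuous_iteratedFDeriv le_rfl
  unfold lap
  fun_prop

lemma abs_lap_le (u : Euc n → ℝ) (x : Euc n) : |lap u x| ≤ n * ‖iteratedFDeriv ℝ 2 u x‖ := by
  have hterm (i : Fin n) : |iteratedFDeriv ℝ 2 u x
      ![EuclideanSpace.single i (1 : ℝ), EuclideanSpace.single i (1 : ℝ)]| ≤
      ‖iteratedFDeriv ℝ 2 u x‖ := by
    simpa [Fin.prod_univ_two] using (iteratedFDeriv ℝ 2 u x).le_opNorm
      ![EuclideanSpace.single i (1 : ℝ), EuclideanSpace.single i (1 : ℝ)]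
  calc |lap u x| ≤ ∑ _i : Fin n, ‖iteratedFDeriv ℝ 2 u x‖ :=
        (Finset.abs_sum_le_sum_abs _ _).trans (Finset.sum_le_sum fun i _ => hterm i)
    _ = n * ‖iteratedFDeriv ℝ 2 u x‖ := by simp

lemma measurable_Lop (ψ : Euc n → ℝ) {u : Euc n → ℝ} (hu : ContDiff ℝ 2 u) :
    Measurable (Lop ψ u) :=
  (continuous_lap hu).measurable.sub ((measurable_gradient ψ).inner (measurable_gradient u))

lemma IsTempered.hasSubexpDecay_gradient {ρ u : Euc n → ℝ} (hu : IsTempered ρ u) :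
    HasSubexpDecay ρ (gradient u) :=
  (hu.hasSubexpDecay 1).of_norm_le_mul_pow_mul (C := 1) (k := 0) fun x => by
    simp [norm_gradient_eq_norm_iteratedFDeriv_one]

lemma IsTempered.hasSubexpDecay_Lop {ρ u ψ : Euc n → ℝ} (hu : IsTempered ρ u) {C : ℝ} {k : ℕ}
    (hψ : ∀ x, ‖gradient ψ x‖ ≤ C * (1 + ‖x‖) ^ k) : HasSubexpDecay ρ (Lop ψ u) := by
  have hlap : HasSubexpDecay ρ (lap u) :=
    (hu.hasSubexpDecay 2).of_norm_le_mul_pow_mul (C := n) (k := 0) fun x => by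
      simpa using abs_lap_le u x
  have hdrift : HasSubexpDecay ρ fun x => ⟪gradient ψ x, gradient u x⟫ :=
    hu.hasSubexpDecay_gradient.of_norm_le_mul_pow_mul fun x =>
      (norm_inner_le_norm _ _).trans (by gcongr; exact hψ x)
  exact hlap.sub hdrift

end Operator

/-! ### The Gaussian measure -/

section Gaussian

variable {n : ℕ} {s : ℝ}

lemma continuous_gaussDensity (n : ℕ) (s : ℝ) : Continuous (gaussDensity n s) := by
  unfold gaussDensity; fun_prop

lemma gaussDensity_pos (hs : 0 < s) (x : Euc n) : 0 < gaussDensity n s x := by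
  unfold gaussDensity; positivity

lemma integral_withDensity_ofReal {α G : Type*} [MeasurableSpace α] [NormedAddCommGroup G]
    [NormedSpace ℝ G] {ν : Measure α} {d : α → ℝ} (hd : Measurable d) (hd0 : ∀ x, 0 ≤ d x)
    (f : α → G) :
    ∫ x, f x ∂(ν.withDensity fun x => ENNReal.ofReal (d x)) = ∫ x, d x • f x ∂ν := by
  rw [integral_withDensity_eq_integral_toReal_smul (by fun_prop) (by simp)]
  simp only [ENNReal.toReal_ofReal (hd0 _)]

lemma integral_gaussMeasure {G : Type*} [NormedAddCommGroup G] [NormedSpace ℝ G] (hs : 0 < s)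
    (f : Euc n → G) : ∫ w, f w ∂(gaussMeasure n s) = ∫ w, gaussDensity n s w • f w :=
  integral_withDensity_ofReal (continuous_gaussDensity n s).measurable
    (fun w => (gaussDensity_pos hs w).le) f

lemma integral_gaussMeasure_add_left (hs : 0 < s) (f : Euc n → ℝ) (x : Euc n) :
    ∫ w, f (x + w) ∂(gaussMeasure n s) = ∫ θ, gaussDensity n s (θ - x) * f θ := by
  rw [integral_gaussMeasure hs, ← integral_sub_right_eq_self _ x]
  simp only [add_sub_cancel, smul_eq_mul]

lemma integrable_gaussDensity_sub_mul (hs : 0 < s) {f : Euc n → ℝ} {x : Euc n}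
    (hf : Integrable (fun w => f (x + w)) (gaussMeasure n s)) :
    Integrable fun θ => gaussDensity n s (θ - x) * f θ := by
  have hm := (continuous_gaussDensity n s).measurable
  rw [gaussMeasure, integrable_withDensity_iff_integrable_smul' (by fun_prop) (by simp)] at hf
  simp only [ENNReal.toReal_ofReal (gaussDensity_pos hs _).le, smul_eq_mul] at hf
  simpa only [add_sub_cancel] using hf.comp_sub_right x

lemma integrable_gaussDensity (hs : 0 < s) : Integrable (gaussDensity n s) := by
  have hexp : Integrable fun x : Euc n => exp (-(1 / (2 * s)) * ‖x‖ ^ 2) := by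
    refine .of_integral_ne_zero ?_
    rw [GaussianFourier.integral_rexp_neg_mul_sq_norm (by positivity)]
    positivity
  refine (hexp.const_mul ((2 * π * s) ^ (-(n : ℝ) / 2))).congr (.of_forall fun x => ?_)
  simp only [gaussDensity]
  ring_nf

lemma charFun_gaussMeasure (hs : 0 < s) (ξ : Euc n) :
    charFun (gaussMeasure n s) ξ = Complex.exp (-(s * ‖ξ‖ ^ 2) / 2) := by
  have hb : 0 < ((1 / (2 * s) : ℝ) : ℂ).re := by rw [Complex.ofReal_re]; positivity
  have hconst : ((π : ℂ) / ((1 / (2 * s) : ℝ) : ℂ)) ^ ((Module.finrank ℝ (Euc n) : ℂ) / 2) =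
      (((2 * π * s) ^ ((n : ℝ) / 2) : ℝ) : ℂ) := by
    rw [Complex.ofReal_cpow (by positivity), finrank_euclideanSpace_fin]
    push_cast
    congr 1
    field_simp
  have hnorm : (2 * π * s) ^ (-(n : ℝ) / 2) * (2 * π * s) ^ ((n : ℝ) / 2) = 1 := by
    rw [← rpow_add (by positivity), neg_div, neg_add_cancel, rpow_zero]
  have hintegrand (x : Euc n) : gaussDensity n s x • Complex.exp (⟪x, ξ⟫ * Complex.I) =
      (((2 * π * s) ^ (-(n : ℝ) / 2) : ℝ) : ℂ) *
      Complex.exp (-((1 / (2 * s) : ℝ) : ℂ) * (‖x‖ : ℂ) ^ 2 + Complex.I * (⟪ξ, x⟫ : ℝ)) := by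
    rw [Complex.exp_add, gaussDensity, Complex.real_smul, Complex.ofReal_mul, mul_assoc,
      Complex.ofReal_exp, real_inner_comm, mul_comm Complex.I]
    congr 3
    push_cast
    ring
  have hs' : (s : ℂ) ≠ 0 := by exact_mod_cast hs.ne'
  rw [charFun_apply, integral_gaussMeasure hs]
  simp only [hintegrand]
  rw [integral_const_mul, GaussianFourier.integral_cexp_neg_mul_sq_norm_add hb, hconst,
    ← mul_assoc, ← Complex.ofReal_mul, hnorm, Complex.ofReal_one, one_mul, Complex.I_sq]
  congr 1
  push_cast
  field_simp
  ring

lemma gaussMeasure_eq_map_stdGaussian (hs : 0 < s) :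
    gaussMeasure n s = (stdGaussian (Euc n)).map (√s • ·) := by
  have : IsFiniteMeasure (gaussMeasure n s) :=
    isFiniteMeasure_withDensity_ofReal (integrable_gaussDensity hs).2
  refine Measure.ext_of_charFun (funext fun ξ => ?_)
  rw [charFun_gaussMeasure hs, charFun_map_smul, charFun_stdGaussian, norm_smul,
    norm_of_nonneg (sqrt_nonneg s), ← Complex.ofReal_pow, ← Complex.ofReal_pow, mul_pow,
    sq_sqrt hs.le, Complex.ofReal_mul]

lemma isGaussian_gaussMeasure (hs : 0 < s) : IsGaussian (gaussMeasure n s) := by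
  rw [gaussMeasure_eq_map_stdGaussian hs]
  exact isGaussian_map (√s • ContinuousLinearMap.id ℝ (Euc n))

lemma memLp_inner_gaussMeasure (hs : 0 < s) (v : Euc n) :
    MemLp (fun w => ⟪v, w⟫) 2 (gaussMeasure n s) := by
  have := isGaussian_gaussMeasure (n := n) hs
  exact IsGaussian.memLp_dual (gaussMeasure n s) (innerSL ℝ v) 2 (by simp)

lemma integral_inner_gaussMeasure (hs : 0 < s) (v : Euc n) :
    ∫ w, ⟪v, w⟫ ∂(gaussMeasure n s) = 0 := by
  rw [gaussMeasure_eq_map_stdGaussian hs, integral_map (by fun_prop) (by fun_prop)]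
  simpa [inner_smul_right] using integral_strongDual_stdGaussian (innerSL ℝ (√s • v))

lemma variance_inner_gaussMeasure (hs : 0 < s) (v : Euc n) :
    Var[fun w => ⟪v, w⟫; gaussMeasure n s] = s * ‖v‖ ^ 2 := by
  have hscale : (fun w : Euc n => ⟪v, w⟫) ∘ (√s • ·) = innerSL ℝ (√s • v) := by
    ext w; simp [inner_smul_right]
  rw [gaussMeasure_eq_map_stdGaussian hs, variance_map (by fun_prop) (by fun_prop), hscale,
    variance_dual_stdGaussian, innerSL_apply_norm, norm_smul, mul_pow,
    norm_of_nonneg (sqrt_nonneg s), sq_sqrt hs.le]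

lemma memLp_add_inner_gaussMeasure (hs : 0 < s) (a : ℝ) (v : Euc n) :
    MemLp (fun w => a + ⟪v, w⟫) 2 (gaussMeasure n s) := by
  have := isGaussian_gaussMeasure (n := n) hs
  exact (memLp_const a).add (memLp_inner_gaussMeasure hs v)

lemma integral_add_inner_sq_gaussMeasure (hs : 0 < s) (a : ℝ) (v : Euc n) :
    ∫ w, (a + ⟪v, w⟫) ^ 2 ∂(gaussMeasure n s) = a ^ 2 + s * ‖v‖ ^ 2 := by
  have := isGaussian_gaussMeasure (n := n) hs
  have hmean : ∫ w, (a + ⟪v, w⟫) ∂(gaussMeasure n s) = a := by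
    rw [integral_add (integrable_const a) ((memLp_inner_gaussMeasure hs v).integrable one_le_two),
      integral_inner_gaussMeasure hs]
    simp
  have hvar := variance_eq_sub (memLp_add_inner_gaussMeasure hs a v)
  rw [hmean, variance_const_add (by fun_prop), variance_inner_gaussMeasure hs] at hvar
  simp only [Pi.pow_apply] at hvar
  linarith

end Gaussian

/-! ### Gaussian tilts as posteriors -/

section Posterior

variable {n : ℕ} {t : ℝ}

lemma inner_sub_mul_norm_sq_div_two_le {E : Type*} [NormedAddCommGroup E] [InnerProductSpace ℝ E]
    (ht : 0 < t) (θ x : E) : ⟪θ, x⟫ - t * ‖x‖ ^ 2 / 2 ≤ ‖θ‖ ^ 2 / (2 * t) := by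
  have hsq : ‖θ - t • x‖ ^ 2 / (2 * t) = ‖θ‖ ^ 2 / (2 * t) - (⟪θ, x⟫ - t * ‖x‖ ^ 2 / 2) := by
    rw [norm_sub_sq_real, norm_smul, inner_smul_right, norm_of_nonneg ht.le]
    field_simp
    ring
  exact sub_nonneg.1 (hsq ▸ by positivity)

lemma gaussDensity_sub_smul (ht : 0 < t) (θ x : Euc n) :
    gaussDensity n t (θ - t • x) =
      gaussDensity n t θ * exp (⟪θ, x⟫ - t * ‖x‖ ^ 2 / 2) := by
  unfold gaussDensity
  rw [mul_assoc (_ ^ _), ← exp_add, norm_sub_sq_real, norm_smul, inner_smul_right,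
    norm_of_nonneg ht.le]
  congr 2
  field_simp
  ring

lemma integrable_exp_inner_sub_mul_norm_sq_div_two (ht : 0 < t) (μ : Measure (Euc n))
    [IsFiniteMeasure μ] (θ : Euc n) :
    Integrable (fun x => exp (⟪θ, x⟫ - t * ‖x‖ ^ 2 / 2)) μ := by
  refine .of_bound (by fun_prop) (exp (‖θ‖ ^ 2 / (2 * t))) (.of_forall fun x => ?_)
  rw [norm_of_nonneg (exp_pos _).le]
  exact exp_le_exp.2 (inner_sub_mul_norm_sq_div_two_le ht θ x)

/-- The conditional law of `X` given `t X + W = θ`, where `X` has law `μ` and `W` is an independent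
centred Gaussian vector of covariance `t Id`; `integral_gaussPosterior` is Bayes' rule. -/
noncomputable def gaussPosterior (μ : Measure (Euc n)) (t : ℝ) (θ : Euc n) : Measure (Euc n) :=
  μ.tilted fun x => ⟪θ, x⟫ - t * ‖x‖ ^ 2 / 2

lemma integral_gaussPosterior (ht : 0 < t) (μ : Measure (Euc n)) (θ : Euc n) (f : Euc n → ℝ) :
    ∫ y, f y ∂(gaussPosterior μ t θ) =
      (∫ y, gaussDensity n t (θ - t • y) * f y ∂μ) / ∫ y, gaussDensity n t (θ - t • y) ∂μ := by
  simp only [gaussDensity_sub_smul ht, mul_assoc]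
  rw [gaussPosterior, integral_tilted, integral_const_mul, integral_const_mul,
    mul_div_mul_left _ _ (gaussDensity_pos ht θ).ne', ← integral_div]
  simp only [smul_eq_mul, div_mul_eq_mul_div]

lemma integral_gaussDensity_sub_smul_pos (ht : 0 < t) (μ : Measure (Euc n)) [IsFiniteMeasure μ]
    [NeZero μ] (θ : Euc n) : 0 < ∫ y, gaussDensity n t (θ - t • y) ∂μ := by
  simp only [gaussDensity_sub_smul ht]
  rw [integral_const_mul]
  exact mul_pos (gaussDensity_pos ht θ)
    (integral_exp_pos (integrable_exp_inner_sub_mul_norm_sq_div_two ht μ θ))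

-- Both sides are double integrals against `G`; Fubini lets `b` be integrated first, where the
-- normalisation `∫ G a` cancels.
lemma integral_integral_mul_div_integral {α β : Type*} [MeasurableSpace α] [MeasurableSpace β]
    {ν : Measure α} {μ : Measure β} [SFinite ν] [SFinite μ] {G F : α → β → ℝ}
    (hG : StronglyMeasurable G.uncurry) (hG0 : ∀ a b, 0 ≤ G a b) (hGne : ∀ a, ∫ b, G a b ∂μ ≠ 0)
    (hGF : Integrable (fun p : α × β => G p.1 p.2 * F p.1 p.2) (ν.prod μ)) :
    ∫ b, ∫ a, G a b * ((∫ b', G a b' * F a b' ∂μ) / ∫ b', G a b' ∂μ) ∂ν ∂μ =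
      ∫ b, ∫ a, G a b * F a b ∂ν ∂μ := by
  set H : α → ℝ := fun a => (∫ b', G a b' * F a b' ∂μ) / ∫ b', G a b' ∂μ
  have hcancel (a : α) : (∫ b, G a b ∂μ) * H a = ∫ b, G a b * F a b ∂μ :=
    mul_div_cancel₀ _ (hGne a)
  have hHm : AEStronglyMeasurable H ν :=
    (hGF.integral_prod_left.aestronglyMeasurable.aemeasurable.div
      (hG.integral_prod_right (ν := μ)).aestronglyMeasurable.aemeasurable).aestronglyMeasurable
  have hGHm : AEStronglyMeasurable (fun p : α × β => G p.1 p.2 * H p.1) (ν.prod μ) :=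
    hG.aestronglyMeasurable.mul hHm.comp_fst
  have hGH : Integrable (fun p : α × β => G p.1 p.2 * H p.1) (ν.prod μ) := by
    refine (integrable_prod_iff hGHm).2 ⟨.of_forall fun a =>
      (Integrable.of_integral_ne_zero (hGne a)).mul_const (H a),
      hGF.integral_prod_left.norm.congr (.of_forall fun a => ?_)⟩
    simp only [norm_mul, norm_of_nonneg (hG0 _ _), integral_mul_const, ← hcancel,
      norm_of_nonneg (integral_nonneg (hG0 a))]
  rw [← integral_integral_swap (f := fun a b => G a b * H a) hGH,
    ← integral_integral_swap (f := fun a b => G a b * F a b) hGF]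
  simp only [integral_mul_const, hcancel]

lemma integral_integral_gaussPosterior (ht : 0 < t) (μ : Measure (Euc n)) [IsFiniteMeasure μ]
    [NeZero μ] {F : Euc n → Euc n → ℝ}
    (hF : Integrable (fun p : Euc n × Euc n => gaussDensity n t (p.1 - t • p.2) * F p.1 p.2)
      (volume.prod μ)) :
    ∫ x, ∫ w, ∫ y, F (t • x + w) y ∂(gaussPosterior μ t (t • x + w)) ∂(gaussMeasure n t) ∂μ =
      ∫ x, ∫ w, F (t • x + w) x ∂(gaussMeasure n t) ∂μ := by
  have hG : StronglyMeasurable (fun θ x : Euc n => gaussDensity n t (θ - t • x)).uncurry := by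
    have := continuous_gaussDensity n t
    exact Continuous.stronglyMeasurable (by unfold Function.uncurry; fun_prop)
  have hbayes := integral_integral_mul_div_integral hG (fun _ _ => (gaussDensity_pos ht _).le)
    (fun θ => (integral_gaussDensity_sub_smul_pos ht μ θ).ne') hF
  simp only [← integral_gaussPosterior ht] at hbayes
  simpa only [← integral_gaussMeasure_add_left ht] using hbayes

variable {μ : Measure (Euc n)} {A : Euc n → ℝ} {V : Euc n → Euc n}

lemma integrable_gaussDensity_mul_add_inner_sq [SFinite μ] (ht : 0 < t) (hA : MemLp A 2 μ)
    (hV : MemLp V 2 μ) :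
    Integrable (fun p : Euc n × Euc n => gaussDensity n t (p.1 - t • p.2) *
      (A p.2 + ⟪V p.2, p.1 - t • p.2⟫) ^ 2) (volume.prod μ) := by
  have hcont := continuous_gaussDensity n t
  have hshift : Continuous fun p : Euc n × Euc n => p.1 - t • p.2 := by fun_prop
  have hm : AEStronglyMeasurable (fun p : Euc n × Euc n => gaussDensity n t (p.1 - t • p.2) *
      (A p.2 + ⟪V p.2, p.1 - t • p.2⟫) ^ 2) (volume.prod μ) :=
    (hcont.comp hshift).aestronglyMeasurable.mul
      ((hA.1.comp_snd.add (hV.1.comp_snd.inner hshift.aestronglyMeasurable)).pow 2)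
  have hnn (θ y : Euc n) : 0 ≤ gaussDensity n t (θ - t • y) * (A y + ⟪V y, θ - t • y⟫) ^ 2 :=
    mul_nonneg (gaussDensity_pos ht _).le (sq_nonneg _)
  have hmoment (y : Euc n) : ∫ θ, gaussDensity n t (θ - t • y) * (A y + ⟪V y, θ - t • y⟫) ^ 2 =
      A y ^ 2 + t * ‖V y‖ ^ 2 := by
    rw [← integral_gaussMeasure_add_left ht fun θ => (A y + ⟪V y, θ - t • y⟫) ^ 2]
    simp only [add_sub_cancel_left, integral_add_inner_sq_gaussMeasure ht]
  have hfiber (y : Euc n) :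
      Integrable fun θ => gaussDensity n t (θ - t • y) * (A y + ⟪V y, θ - t • y⟫) ^ 2 := by
    refine integrable_gaussDensity_sub_mul ht (f := fun θ => (A y + ⟪V y, θ - t • y⟫) ^ 2) ?_
    simpa only [add_sub_cancel_left] using
      (memLp_add_inner_gaussMeasure ht (A y) (V y)).integrable_sq
  refine (integrable_prod_iff' hm).2 ⟨.of_forall hfiber, ?_⟩
  simp only [norm_of_nonneg (hnn _ _), hmoment]
  exact hA.integrable_sq.add ((hV.integrable_norm_pow two_ne_zero).const_mul t)

lemma integral_gaussPosterior_add_inner_sq [IsFiniteMeasure μ] [NeZero μ] (ht : 0 < t)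
    (hA : MemLp A 2 μ) (hV : MemLp V 2 μ) :
    ∫ x, ∫ w, ∫ y, (A y + ⟪V y, t • x + w - t • y⟫) ^ 2 ∂(gaussPosterior μ t (t • x + w))
        ∂(gaussMeasure n t) ∂μ =
      ∫ x, A x ^ 2 ∂μ + t * ∫ x, ‖V x‖ ^ 2 ∂μ := by
  rw [integral_integral_gaussPosterior ht μ (F := fun θ y => (A y + ⟪V y, θ - t • y⟫) ^ 2)
    (integrable_gaussDensity_mul_add_inner_sq ht hA hV)]
  simp only [add_sub_cancel_left, integral_add_inner_sq_gaussMeasure ht]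
  rw [integral_add hA.integrable_sq ((hV.integrable_norm_pow two_ne_zero).const_mul t),
    integral_const_mul]

end Posterior

/-! ### The tilted density -/

section TiltDensity

variable {n : ℕ} {t : ℝ}

lemma tiltZ_eq_integral {ρ : Euc n → ℝ} (hρ : Measurable ρ) (hρ0 : ∀ x, 0 ≤ ρ x) (t : ℝ)
    (θ : Euc n) :
    tiltZ ρ t θ = ∫ x, exp (⟪θ, x⟫ - t * ‖x‖ ^ 2 / 2)
      ∂(volume.withDensity fun x => ENNReal.ofReal (ρ x)) := by
  rw [integral_withDensity_ofReal hρ hρ0]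
  simp only [tiltZ, smul_eq_mul, mul_comm]

lemma tiltMeasure_eq_gaussPosterior {ρ : Euc n → ℝ} (hρ : Measurable ρ) (hρ0 : ∀ x, 0 ≤ ρ x) (t : ℝ)
    (θ : Euc n) :
    tiltMeasure ρ t θ = gaussPosterior (volume.withDensity fun x => ENNReal.ofReal (ρ x)) t θ := by
  rw [gaussPosterior, Measure.tilted, ← tiltZ_eq_integral hρ hρ0,
    ← withDensity_mul _ (by fun_prop) (by fun_prop), tiltMeasure]
  congr 1 with x
  rw [Pi.mul_apply, ← ENNReal.ofReal_mul (hρ0 x), tiltDensity, mul_comm (ρ x), div_mul_eq_mul_div]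

lemma neZero_withDensity_ofReal {α : Type*} [MeasurableSpace α] {ν : Measure α} [NeZero ν]
    {d : α → ℝ} (hd : Measurable d) (hd0 : ∀ x, 0 < d x) :
    NeZero (ν.withDensity fun x => ENNReal.ofReal (d x)) where
  out h := NeZero.ne ν <| Measure.absolutelyContinuous_zero_iff.1 <|
    h ▸ withDensity_absolutelyContinuous' (by fun_prop) (.of_forall fun x => by simpa using hd0 x)

lemma tiltZ_pos {ρ : Euc n → ℝ} (hρ : Measurable ρ) (hρ0 : ∀ x, 0 < ρ x)
    [IsFiniteMeasure (volume.withDensity fun x => ENNReal.ofReal (ρ x))] (ht : 0 < t)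
    (θ : Euc n) : 0 < tiltZ ρ t θ := by
  have := neZero_withDensity_ofReal (ν := volume) hρ hρ0
  rw [tiltZ_eq_integral hρ fun x => (hρ0 x).le]
  exact integral_exp_pos (integrable_exp_inner_sub_mul_norm_sq_div_two ht _ θ)

lemma IsTempered.tiltDensity {ρ u : Euc n → ℝ} (hu : IsTempered ρ u) (hρ : ∀ x, 0 < ρ x)
    (ht : 0 < t) {θ : Euc n} (hZ : 0 < tiltZ ρ t θ) : IsTempered (tiltDensity ρ t θ) u := by
  refine ⟨hu.1, fun m => (hu.hasSubexpDecay m).of_density_le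
    (K := exp (‖θ‖ ^ 2 / (2 * t)) / tiltZ ρ t θ) (by positivity)
    (fun x => div_pos (mul_pos (exp_pos _) (hρ x)) hZ) fun x => ?_⟩
  rw [_root_.tiltDensity, div_mul_eq_mul_div]
  have := (hρ x).le
  gcongr
  exact inner_sub_mul_norm_sq_div_two_le ht θ x

lemma hasGradientAt_neg_log_tiltDensity {ψ : Euc n → ℝ} (t : ℝ) {θ y : Euc n}
    (hψ : DifferentiableAt ℝ ψ y) (hZ : 0 < tiltZ (fun x => exp (-ψ x)) t θ) :
    HasGradientAt (fun x => -log (tiltDensity (fun x => exp (-ψ x)) t θ x))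
      (gradient ψ y - (θ - t • y)) y := by
  have hlog : (fun x => -log (tiltDensity (fun x => exp (-ψ x)) t θ x)) =
      fun x => ψ x - ⟪θ, x⟫ + t / 2 * ‖x‖ ^ 2 + log (tiltZ (fun x => exp (-ψ x)) t θ) := by
    ext x
    rw [tiltDensity, log_div (by positivity) hZ.ne', ← exp_add, log_exp]
    ring
  rw [hlog, hasGradientAt_iff_hasFDerivAt]
  refine (((hψ.hasFDerivAt.sub (innerSL ℝ θ).hasFDerivAt).add
    ((hasStrictFDerivAt_norm_sq y).hasFDerivAt.const_mul (t / 2))).add_const _).congr_fderiv ?_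
  ext v
  simp
  ring

lemma Lop_neg_log_tiltDensity {ψ : Euc n → ℝ} (t : ℝ) {θ y : Euc n}
    (hψ : DifferentiableAt ℝ ψ y) (hZ : 0 < tiltZ (fun x => exp (-ψ x)) t θ) (u : Euc n → ℝ) :
    Lop (fun x => -log (tiltDensity (fun x => exp (-ψ x)) t θ x)) u y =
      Lop ψ u y + ⟪gradient u y, θ - t • y⟫ := by
  rw [Lop, (hasGradientAt_neg_log_tiltDensity t hψ hZ).gradient, inner_sub_left, Lop,
    real_inner_comm (gradient u y) (θ - t • y)]
  ring

end TiltDensity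

/-! ### The Bochner formula -/

theorem localized_bochner_general {n : ℕ} (μ : Measure (Euc n)) [IsFiniteMeasure μ]
    (ψ : Euc n → ℝ) (hψ : Differentiable ℝ ψ) {C : ℝ} {k : ℕ}
    (hgrowth : ∀ x, ‖gradient ψ x‖ ≤ C * (1 + ‖x‖) ^ k)
    (hμ : μ = volume.withDensity fun x => ENNReal.ofReal (exp (-ψ x))) (t : ℝ) (ht : 0 < t)
    (u : Euc n → ℝ) (hu : IsTempered (fun x => exp (-ψ x)) u) :
    (∀ᵐ x ∂μ, ∀ᵐ w ∂(gaussMeasure n t),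
      IsTempered (tiltDensity (fun y => exp (-ψ y)) t (t • x + w)) u) ∧
    ∫ x, (Lop ψ u x) ^ 2 ∂μ + t * ∫ x, ‖gradient u x‖ ^ 2 ∂μ =
      ∫ x, ∫ w, ∫ y,
        (Lop (fun z => -log (tiltDensity (fun v => exp (-ψ v)) t (t • x + w) z)) u y) ^ 2
          ∂(tiltMeasure (fun v => exp (-ψ v)) t (t • x + w)) ∂(gaussMeasure n t) ∂μ := by
  subst hμ
  have hρ : Measurable fun x => exp (-ψ x) := by have := hψ.continuous; fun_prop
  have hρ0 (x : Euc n) : 0 < exp (-ψ x) := exp_pos _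
  have hZ (θ : Euc n) : 0 < tiltZ (fun x => exp (-ψ x)) t θ := tiltZ_pos hρ hρ0 ht θ
  refine ⟨.of_forall fun x => .of_forall fun w => hu.tiltDensity hρ0 ht (hZ _), ?_⟩
  have hLu : MemLp (Lop ψ u) 2 (volume.withDensity fun x => ENNReal.ofReal (exp (-ψ x))) :=
    (hu.hasSubexpDecay_Lop hgrowth).memLp_two_withDensity volume hρ (fun x => (hρ0 x).le)
      (measurable_Lop ψ (hu.1.of_le (by norm_cast))).aestronglyMeasurable
  have hgrad : MemLp (gradient u) 2 (volume.withDensity fun x => ENNReal.ofReal (exp (-ψ x))) :=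
    hu.hasSubexpDecay_gradient.memLp_two_withDensity volume hρ (fun x => (hρ0 x).le)
      (measurable_gradient u).aestronglyMeasurable
  have := neZero_withDensity_ofReal (ν := (volume : Measure (Euc n))) hρ hρ0
  simp only [Lop_neg_log_tiltDensity t (hψ _) (hZ _),
    tiltMeasure_eq_gaussPosterior hρ fun x => (hρ0 x).le]
  exact (integral_gaussPosterior_add_inner_sq ht hLu hgrad).symm

/-- Localized Bochner formula: almost surely `u` is `μ_t`-tempered and
`∫ (Lu)² dμ + t ∫ |∇u|² dμ = E ∫ (L_t u)² dμ_t`, where `θ_t = tX + W`. -/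
theorem localized_bochner {n : ℕ} (μ : Measure (Euc n)) [IsProbabilityMeasure μ]
    (ψ : Euc n → ℝ) (hreg : IsRegularMeasure μ ψ) (t : ℝ) (ht : 0 < t)
    (u : Euc n → ℝ) (hu : IsTempered (fun x => Real.exp (-ψ x)) u) :
    (∀ᵐ x ∂μ, ∀ᵐ w ∂(gaussMeasure n t),
      IsTempered (tiltDensity (fun y => Real.exp (-ψ y)) t (t • x + w)) u) ∧
    (∫ x, (Lop ψ u x) ^ 2 ∂μ) + t * ∫ x, ‖gradient u x‖ ^ 2 ∂μ =
      ∫ x, ∫ w,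
        (∫ y, (Lop (fun z => -Real.log (tiltDensity (fun v => Real.exp (-ψ v)) t (t • x + w) z)) u y) ^ 2
          ∂(tiltMeasure (fun v => Real.exp (-ψ v)) t (t • x + w)))
        ∂(gaussMeasure n t) ∂μ :=
  have ⟨_, _, hgrowth⟩ := hreg.1.2.2 1
  localized_bochner_general μ ψ (hreg.1.1.differentiable (by simp))
    (fun x => norm_gradient_eq_norm_iteratedFDeriv_one ψ x ▸ hgrowth x) hreg.2 t ht u hu
end
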